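/- For every real number α with 1 < α < 2 there exists a positive integer N such that for all integers n > N, there are at least ⌊n^α⌋ primes q satisfying p_{n+1} < q < p₁·p₂⋯p_{n+1}, where p_k denotes the k-th prime (p₁ = 2). -/

import Mathlib

open Finset

/-!
The product `P` of the first `n + 1` primes is at least `2 ^ (n + 1)`, so by Chebyshev's lower bound
there are at least about `2 ^ (n + 1) / (n + 1)` primes below `P`. Only `n + 1` of them are at most
`p_{n+1}`, so the number of primes in between outgrows every power of `n`.
-/

section Counting

variable {p : ℕ → Prop} [DecidablePred p]

theorem count_succ_le_count_add_one (n : ℕ) : Nat.count p (n + 1) ≤ Nat.count p n + 1 := by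
  rw [Nat.count_succ]
  split_ifs <;> lia

theorem count_le_count_succ_add_card_filter_Ioo (a b : ℕ) :
    Nat.count p b ≤ Nat.count p (a + 1) + #{q ∈ Ioo a b | p q} := by
  have hcover : range b ⊆ range (a + 1) ∪ Ioo a b := by
    intro q hq
    simp only [mem_union, mem_range, mem_Ioo] at hq ⊢
    lia
  simp only [Nat.count_eq_card_filter_range]
  grw [hcover, filter_union, card_union_le]

theorem count_le_add_card_filter_Ioo_nth (n b : ℕ) :
    Nat.count p b ≤ n + 1 + #{q ∈ Ioo (Nat.nth p n) b | p q} := by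
  grw [count_le_count_succ_add_card_filter_Ioo (Nat.nth p n) b, count_succ_le_count_add_one,
    Nat.le_nth_of_count_le le_rfl]

end Counting

section Growth

open Filter

theorem eventually_mul_pow_lt_pow (c : ℝ) (k : ℕ) {r : ℝ} (hr : 1 < r) :
    ∀ᶠ n : ℕ in atTop, c * (n : ℝ) ^ k < r ^ n := by
  have hlim := (tendsto_pow_const_div_const_pow_of_one_lt k hr).const_mul c
  rw [mul_zero] at hlim
  filter_upwards [hlim.eventually_lt_const one_pos] with n hn
  rwa [← mul_div_assoc, div_lt_one (by positivity)] at hn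

end Growth

section PrimesBelowPrimorial

open Filter

theorem two_pow_le_prod_nth_prime (m : ℕ) :
    2 ^ m ≤ ∏ i ∈ range m, Nat.nth Nat.Prime i := by
  simpa only [card_range] using
    pow_card_le_prod (range m) (Nat.nth Nat.Prime) 2 fun i _ => (Nat.prime_nth_prime i).two_le

theorem two_pow_le_mul_primeCounting_two_pow (m : ℕ) :
    2 ^ m ≤ m * (Nat.primeCounting (2 ^ m) + 1) + 1 := by
  rcases m.eq_zero_or_pos with rfl | hm
  · norm_num
  have hlog2 : 0 < Real.log 2 := Real.log_pos one_lt_two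
  have hlog_succ : Real.log (2 ^ m + 1) ≤ (m + 1) * Real.log 2 := by
    rw [← Nat.cast_succ, ← Real.log_pow, Nat.succ_eq_add_one, pow_succ, mul_two]
    gcongr
    exact one_le_pow₀ one_le_two
  have chebyshev := Chebyshev.pi_ge (2 ^ m)
  push_cast at chebyshev
  rw [Real.log_pow, div_le_iff₀ (by positivity)] at chebyshev
  have hreal : (2 : ℝ) ^ m ≤ m * (Nat.primeCounting (2 ^ m) + 1) + 1 :=
    le_of_mul_le_mul_right (by linarith) hlog2
  exact_mod_cast hreal

theorem two_pow_le_mul_card_primes_Ioo (n : ℕ) :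
    2 ^ (n + 1) ≤ (n + 1) * (#{q ∈ Ioo (Nat.nth Nat.Prime n)
      (∏ i ∈ range (n + 1), Nat.nth Nat.Prime i) | q.Prime} + n + 3) + 1 := by
  set P := ∏ i ∈ range (n + 1), Nat.nth Nat.Prime i
  have hcount : Nat.primeCounting (2 ^ (n + 1)) + 1 ≤
      #{q ∈ Ioo (Nat.nth Nat.Prime n) P | q.Prime} + n + 3 := by
    have h₁ : Nat.primeCounting (2 ^ (n + 1)) ≤ Nat.count Nat.Prime (2 ^ (n + 1)) + 1 :=
      count_succ_le_count_add_one _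
    have h₂ := Nat.count_monotone Nat.Prime (two_pow_le_prod_nth_prime (n + 1))
    have h₃ := count_le_add_card_filter_Ioo_nth (p := Nat.Prime) n P
    lia
  grw [two_pow_le_mul_primeCounting_two_pow, hcount]

theorem eventually_pow_le_card_primes_Ioo (k : ℕ) :
    ∀ᶠ n : ℕ in atTop, n ^ k ≤ #{q ∈ Ioo (Nat.nth Nat.Prime n)
      (∏ i ∈ range (n + 1), Nat.nth Nat.Prime i) | q.Prime} := by
  filter_upwards [(tendsto_add_atTop_nat 1).eventually
    (eventually_mul_pow_lt_pow 5 (k + 2) one_lt_two)] with n hn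
  replace hn : 5 * (n + 1) ^ (k + 2) < 2 ^ (n + 1) := by exact_mod_cast hn
  have hcard := two_pow_le_mul_card_primes_Ioo n
  set c := #{q ∈ Ioo (Nat.nth Nat.Prime n) (∏ i ∈ range (n + 1), Nat.nth Nat.Prime i) | q.Prime}
  by_contra! hlt
  have hpow {j : ℕ} (hj : j ≤ k + 2) : (n + 1) ^ j ≤ (n + 1) ^ (k + 2) :=
    Nat.pow_le_pow_right n.succ_pos hj
  refine hn.not_ge ?_
  calc 2 ^ (n + 1) ≤ (n + 1) * (c + n + 3) + 1 := hcard
    _ ≤ (n + 1) * ((n + 1) ^ k + n + 3) + 1 := by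
      grw [hlt]
      gcongr
      exact n.le_succ
    _ = (n + 1) ^ (k + 1) + (n + 1) ^ 2 + 2 * (n + 1) ^ 1 + (n + 1) ^ 0 := by ring
    _ ≤ 5 * (n + 1) ^ (k + 2) := by
      linarith [hpow (j := k + 1) (by lia), hpow (j := 2) (by lia), hpow (j := 1) (by lia),
        hpow (j := 0) (by lia)]

theorem stmt_2_general (α : ℝ) :
    ∀ᶠ n : ℕ in atTop, ⌊(n : ℝ) ^ α⌋₊ ≤ #{q ∈ Ioo (Nat.nth Nat.Prime n)
      (∏ i ∈ range (n + 1), Nat.nth Nat.Prime i) | q.Prime} := by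
  filter_upwards [eventually_pow_le_card_primes_Ioo ⌈α⌉₊, eventually_ge_atTop 1] with n hcard hn
  refine le_trans (Nat.floor_le_of_le ?_) hcard
  calc (n : ℝ) ^ α ≤ (n : ℝ) ^ (⌈α⌉₊ : ℝ) :=
        Real.rpow_le_rpow_of_exponent_le (mod_cast hn) (Nat.le_ceil α)
    _ = ((n ^ ⌈α⌉₊ : ℕ) : ℝ) := by rw [Real.rpow_natCast, Nat.cast_pow]

end PrimesBelowPrimorial

/-- For every real `α` with `1 < α < 2` there is a positive integer `N` such that for all
integers `n > N` there are at least `⌊n^α⌋` primes `q` with `p_{n+1} < q < p₁·p₂⋯p_{n+1}`,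
where `p_k` is the `k`-th prime (so `p_{k+1} = Nat.nth Nat.Prime k`). -/
theorem stmt_2 (α : ℝ) (hα1 : 1 < α) (hα2 : α < 2) :
    ∃ N : ℕ, 0 < N ∧ ∀ n : ℕ, N < n →
      ⌊(n : ℝ) ^ α⌋₊ ≤
        ((Finset.Ioo (Nat.nth Nat.Prime n)
            (∏ i ∈ Finset.range (n + 1), Nat.nth Nat.Prime i)).filter Nat.Prime).card := by
  obtain ⟨N, hN⟩ := Filter.eventually_atTop.1 (stmt_2_general α)
  exact ⟨N + 1, N.succ_pos, fun n hn => hN n (by lia)⟩
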